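/- Let ω > 0 and q > p > 1 be real numbers, and let f(u) = -ω·u + u^p - u^q. Then f̃(u) := (f'(u) + u·f''(u))·f(u) - u·f'(u)² < 0 for all u > 0 if and only if there exists u > 0 with f(u) > 0. -/

import Mathlib

/-- The double power nonlinearity `f(u) = -ω·u + u^p - u^q` (real powers). -/
noncomputable def f (ω p q u : ℝ) : ℝ := -ω * u + u ^ p - u ^ q

/-- Its derivative for `u > 0`: `f'(u) = -ω + p·u^(p-1) - q·u^(q-1)`. -/
noncomputable def f' (ω p q u : ℝ) : ℝ := -ω + p * u ^ (p - 1) - q * u ^ (q - 1)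

/-- Its second derivative for `u > 0`:
`f''(u) = p(p-1)·u^(p-2) - q(q-1)·u^(q-2)`. -/
noncomputable def f'' (p q u : ℝ) : ℝ :=
  p * (p - 1) * u ^ (p - 2) - q * (q - 1) * u ^ (q - 2)

theorem bern_aux (a b t : ℝ) (ha : 0 < a) (hab : a < b) (ht : 0 < t) :
    b * t ^ a - a * t ^ b ≤ b - a := by
  have hx : 0 < t ^ a := Real.rpow_pos_of_pos ht a
  have h := one_add_mul_self_le_rpow_one_add (s := t ^ a - 1) (p := b / a) (by linarith)
    (by rw [le_div_iff₀ ha]; linarith)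
  have e : (1 + (t ^ a - 1)) ^ (b / a) = t ^ b := by
    rw [add_sub_cancel, ← Real.rpow_mul ht.le]
    congr 1
    field_simp
  rw [e] at h
  have h2 := mul_le_mul_of_nonneg_left h ha.le
  have e2 : a * (1 + b / a * (t ^ a - 1)) = a + b * (t ^ a - 1) := by
    field_simp
  rw [e2] at h2
  linarith

theorem f_form (ω p q u : ℝ) (hu : 0 < u) :
    f ω p q u = u * (-ω + u ^ (p - 1) - u ^ (q - 1)) := by
  have h1 : u ^ p = u ^ (p - 1) * u := by
    rw [← Real.rpow_add_one hu.ne']; congr 1; ring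
  have h2 : u ^ q = u ^ (q - 1) * u := by
    rw [← Real.rpow_add_one hu.ne']; congr 1; ring
  unfold f
  rw [h1, h2]; ring

theorem ft_form (ω p q u : ℝ) (hu : 0 < u) :
    (f' ω p q u + u * f'' p q u) * f ω p q u - u * (f' ω p q u) ^ 2 =
      u * (-ω * (p - 1) ^ 2 * u ^ (p - 1) + ω * (q - 1) ^ 2 * u ^ (q - 1)
        - ((q - 1) - (p - 1)) ^ 2 * (u ^ (p - 1) * u ^ (q - 1))) := by
  have h1 : u ^ (p - 1) = u ^ (p - 2) * u := by
    rw [← Real.rpow_add_one hu.ne']; congr 1; ring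
  have h2 : u ^ (q - 1) = u ^ (q - 2) * u := by
    rw [← Real.rpow_add_one hu.ne']; congr 1; ring
  rw [f_form ω p q u hu]
  unfold f' f''
  rw [h1, h2]; ring

theorem ftilde_neg_iff_f_pos (ω p q : ℝ) (hω : 0 < ω) (hp : 1 < p) (hpq : p < q) :
    (∀ u : ℝ, 0 < u →
        (f' ω p q u + u * f'' p q u) * f ω p q u - u * (f' ω p q u) ^ 2 < 0) ↔
      ∃ u : ℝ, 0 < u ∧ 0 < f ω p q u := by
  obtain ⟨a, rfl⟩ : ∃ a, p = a + 1 := ⟨p - 1, by ring⟩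
  obtain ⟨b, rfl⟩ : ∃ b, q = b + 1 := ⟨q - 1, by ring⟩
  have ha : 0 < a := by linarith
  have hab : a < b := by linarith
  have hb : 0 < b := by linarith
  have hd : 0 < b - a := by linarith
  obtain ⟨u0, hu0, hB0⟩ : ∃ u0 : ℝ, 0 < u0 ∧ b * u0 ^ b = a * u0 ^ a := by
    have hr : 0 < a / b := by positivity
    refine ⟨(a / b) ^ (1 / (b - a)), Real.rpow_pos_of_pos hr _, ?_⟩
    set w := (a / b) ^ (1 / (b - a)) with hw
    have hw0 : 0 < w := Real.rpow_pos_of_pos hr _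
    have h1 : w ^ (b - a) = a / b := by
      rw [hw, ← Real.rpow_mul hr.le, one_div_mul_cancel hd.ne', Real.rpow_one]
    have h2 : w ^ b = w ^ (b - a) * w ^ a := by
      rw [← Real.rpow_add hw0]; congr 1; ring
    rw [h2, h1]; field_simp
  have hA0 : 0 < u0 ^ a := Real.rpow_pos_of_pos hu0 a
  constructor
  · intro h
    refine ⟨u0, hu0, ?_⟩
    have h := h u0 hu0
    rw [ft_form _ _ _ _ hu0] at h
    rw [f_form _ _ _ _ hu0]
    simp only [add_sub_cancel_right] at h ⊢
    have h3 := neg_of_mul_neg_right h hu0.le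
    generalize u0 ^ a = A at *
    generalize u0 ^ b = B at *
    obtain rfl : B = a * A / b := by field_simp; linarith
    have e : -ω * a ^ 2 * A + ω * b ^ 2 * (a * A / b) - (b - a) ^ 2 * (A * (a * A / b))
        = -(a * A * (b - a) * (-ω + A - a * A / b)) := by
      field_simp; ring
    rw [e] at h3
    have : 0 < a * A * (b - a) := by positivity
    have := pos_of_mul_pos_right (neg_neg_iff_pos.mp h3) this.le
    positivity
  · rintro ⟨u, hu, hf⟩ v hv
    rw [f_form _ _ _ _ hu] at hf
    rw [ft_form _ _ _ _ hv]
    simp only [add_sub_cancel_right] at hf ⊢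
    have hf := pos_of_mul_pos_right hf hu.le
    have k1 := bern_aux a b (u / u0) ha hab (by positivity)
    have k2 := bern_aux a b (u0 / v) ha hab (by positivity)
    rw [Real.div_rpow hu.le hu0.le, Real.div_rpow hu.le hu0.le] at k1
    rw [Real.div_rpow hu0.le hv.le, Real.div_rpow hu0.le hv.le] at k2
    have hX : 0 < v ^ a := Real.rpow_pos_of_pos hv a
    have hY : 0 < v ^ b := Real.rpow_pos_of_pos hv b
    apply mul_neg_of_pos_of_neg hv
    generalize u0 ^ a = A at *
    generalize u0 ^ b = B at *
    generalize u ^ a = U at *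
    generalize u ^ b = V at *
    generalize v ^ a = X at *
    generalize v ^ b = Y at *
    obtain rfl : B = a * A / b := by field_simp; linarith
    have e1 : b * (U / A) - a * (V / (a * A / b)) = b * (U - V) / A := by
      field_simp
    rw [e1, div_le_iff₀ hA0] at k1
    have k3 : b * ω < (b - a) * A := by nlinarith
    have e2 : b * (A / X) - a * (a * A / b / Y) = A * (b ^ 2 * Y - a ^ 2 * X) / (b * (X * Y)) := by
      field_simp
    rw [e2, div_le_iff₀ (by positivity)] at k2
    have hXY : 0 < X * Y := by positivity
    have k4 : ω * (A * (b ^ 2 * Y - a ^ 2 * X)) < A * ((b - a) ^ 2 * (X * Y)) := by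
      have m1 := mul_le_mul_of_nonneg_left k2 hω.le
      have m2 := mul_lt_mul_of_pos_right k3 (mul_pos hd hXY)
      nlinarith
    have k5 : ω * (b ^ 2 * Y - a ^ 2 * X) < (b - a) ^ 2 * (X * Y) := by
      apply lt_of_mul_lt_mul_left _ hA0.le
      linarith
    linarith
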